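/- arXiv:2307.05765 — 4 statements merged into one kernel-verified Lean document; each statement's English description precedes it below -/
import Mathlib

section
/- Let K be a field and let u, v, w ∈ K² be pairwise linearly independent vectors. Then there exist g ∈ SL(2,K), nonzero scalars c₁, c₂, c₃ ∈ K, and λ ∈ K, λ ≠ 0, such that g·u = c₁·e₁, g·v = c₂·e₂, g·w = c₃·(e₁ + λ·e₂), and moreover λ · det(u,v) · det(v,w) · det(w,u) is the square of a nonzero element of K. -/
theorem det_ne_aux {K : Type*} [Field K] (u v : Fin 2 → K)
    (h : LinearIndependent K ![u, v]) : u 0 * v 1 - u 1 * v 0 ≠ 0 := by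
  have h1 : LinearIndependent K (Matrix.of ![u, v]).row := h
  rw [Matrix.linearIndependent_rows_iff_isUnit, Matrix.isUnit_iff_isUnit_det,
    Matrix.det_fin_two, isUnit_iff_ne_zero] at h1
  simpa using h1

theorem stmt2 (K : Type*) [Field K] (u v w : Fin 2 → K)
    (huv : LinearIndependent K ![u, v]) (hvw : LinearIndependent K ![v, w])
    (hwu : LinearIndependent K ![w, u]) :
    ∃ (g : Matrix.SpecialLinearGroup (Fin 2) K) (c₁ c₂ c₃ lam : K),
      c₁ ≠ 0 ∧ c₂ ≠ 0 ∧ c₃ ≠ 0 ∧ lam ≠ 0 ∧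
      (↑g : Matrix (Fin 2) (Fin 2) K).mulVec u = c₁ • ![1, 0] ∧
      (↑g : Matrix (Fin 2) (Fin 2) K).mulVec v = c₂ • ![0, 1] ∧
      (↑g : Matrix (Fin 2) (Fin 2) K).mulVec w = c₃ • (![1, 0] + lam • ![0, 1]) ∧
      ∃ t : K, t ≠ 0 ∧
        lam * ((u 0 * v 1 - u 1 * v 0) * (v 0 * w 1 - v 1 * w 0) * (w 0 * u 1 - w 1 * u 0))
          = t ^ 2 := by
  have hd := det_ne_aux u v huv
  have hq := det_ne_aux v w hvw
  have hp := det_ne_aux w u hwu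
  generalize hD : u 0 * v 1 - u 1 * v 0 = d at *
  generalize hQ : v 0 * w 1 - v 1 * w 0 = q at *
  generalize hP : w 0 * u 1 - w 1 * u 0 = p at *
  refine ⟨⟨!![v 1 / d, - v 0 / d; - u 1, u 0], ?_⟩, 1, d, - q / d, p * d / q, one_ne_zero, hd,
    div_ne_zero (neg_ne_zero.mpr hq) hd, div_ne_zero (mul_ne_zero hp hd) hq, ?_, ?_, ?_,
    p * d, mul_ne_zero hp hd, ?_⟩
  · rw [Matrix.det_fin_two_of]
    field_simp
    linear_combination hD
  · ext i
    fin_cases i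
    · simp [Matrix.mulVec, dotProduct, Fin.sum_univ_two]
      field_simp
      linear_combination hD
    · simp [Matrix.mulVec, dotProduct, Fin.sum_univ_two]
      ring
  · ext i
    fin_cases i
    · simp [Matrix.mulVec, dotProduct, Fin.sum_univ_two]
      ring
    · simp [Matrix.mulVec, dotProduct, Fin.sum_univ_two]
      linear_combination hD
  · ext i
    fin_cases i
    · simp [Matrix.mulVec, dotProduct, Fin.sum_univ_two]
      field_simp
      linear_combination -hQ
    · simp [Matrix.mulVec, dotProduct, Fin.sum_univ_two]
      field_simp
      linear_combination -hP
  · field_simp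
end

section
/- Let K be a field and let λ, μ ∈ K be nonzero. There exist g ∈ SL(2,K) and nonzero scalars c₁, c₂, c₃ ∈ K with g·e₁ = c₁·e₁, g·e₂ = c₂·e₂ and g·(e₁ + λ·e₂) = c₃·(e₁ + μ·e₂) if and only if there exists t ∈ K, t ≠ 0, with λ = t²·μ. -/
theorem stmt3 (K : Type*) [Field K] (lam mu : K) (hlam : lam ≠ 0) (hmu : mu ≠ 0) :
    (∃ (g : Matrix.SpecialLinearGroup (Fin 2) K) (c₁ c₂ c₃ : K),
      c₁ ≠ 0 ∧ c₂ ≠ 0 ∧ c₃ ≠ 0 ∧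
      (↑g : Matrix (Fin 2) (Fin 2) K).mulVec ![1, 0] = c₁ • ![1, 0] ∧
      (↑g : Matrix (Fin 2) (Fin 2) K).mulVec ![0, 1] = c₂ • ![0, 1] ∧
      (↑g : Matrix (Fin 2) (Fin 2) K).mulVec (![1, 0] + lam • ![0, 1])
        = c₃ • (![1, 0] + mu • ![0, 1])) ↔
    ∃ t : K, t ≠ 0 ∧ lam = t ^ 2 * mu := by
  constructor
  · rintro ⟨g, c₁, c₂, c₃, h1, h2, h3, e1, e2, e3⟩
    have hd := g.det_coe
    rw [Matrix.det_fin_two] at hd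
    have a0 := congrFun e1 0
    have a1 := congrFun e1 1
    have b0 := congrFun e2 0
    have b1 := congrFun e2 1
    have d0 := congrFun e3 0
    have d1 := congrFun e3 1
    simp [Matrix.mulVec, dotProduct, Fin.sum_univ_two] at a0 a1 b0 b1 d0 d1
    rw [a0, b0, a1, b1] at hd
    rw [a0, b0] at d0
    rw [a1, b1] at d1
    refine ⟨c₁, h1, ?_⟩
    have h : c₃ = c₁ := by linear_combination -d0
    subst h
    linear_combination c₃ * d1 - lam * hd
  · rintro ⟨t, ht, h⟩
    refine ⟨⟨!![t, 0; 0, t⁻¹], by simp [Matrix.det_fin_two, ht]⟩, t, t⁻¹, t, ht,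
      inv_ne_zero ht, ht, ?_, ?_, ?_⟩
    · ext i; fin_cases i <;> simp [Matrix.mulVec, dotProduct, Fin.sum_univ_two]
    · ext i; fin_cases i <;> simp [Matrix.mulVec, dotProduct, Fin.sum_univ_two]
    · have h' : t⁻¹ * lam = t * mu := by rw [h]; field_simp
      ext i; fin_cases i <;> simp [Matrix.mulVec, dotProduct, Fin.sum_univ_two, h']
end

section
/- Let σ be a permutation of {0,1,…,m−1} and let j ∈ {0,1,…,m−1}. Define inv(j) to be the number of indices i such that either (i < j and σ(j) < σ(i)) or (j < i and σ(i) < σ(j)). Then inv(j) has the same parity as σ(j) + j; equivalently, (−1)^{inv(j)} = (−1)^{σ(j)−j}. -/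
theorem stmt9 (m : ℕ) (σ : Equiv.Perm (Fin m)) (j : Fin m) :
    ((Finset.univ.filter fun i : Fin m =>
        (i < j ∧ σ j < σ i) ∨ (j < i ∧ σ i < σ j)).card ≡ (σ j : ℕ) + (j : ℕ) [MOD 2]) ∧
    ((-1 : ℤ) ^ (Finset.univ.filter fun i : Fin m =>
        (i < j ∧ σ j < σ i) ∨ (j < i ∧ σ i < σ j)).card
      = (-1 : ℤ) ^ ((σ j : ℕ) + (j : ℕ))) := by
  have hA : (Finset.univ.filter fun i : Fin m => i < j).card = (j : ℕ) := by
    rw [← Fin.card_Iio j]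
    congr 1
    ext i
    simp
  have hB : (Finset.univ.filter fun i : Fin m => σ i < σ j).card = (σ j : ℕ) := by
    rw [← Fin.card_Iio (σ j)]
    apply Finset.card_bij (fun i _ => σ i)
    · intro i hi
      simpa using hi
    · intro a _ b _ h
      exact σ.injective h
    · intro b hb
      exact ⟨σ.symm b, by simpa using hb, by simp⟩
  have key : (Finset.univ.filter fun i : Fin m =>
        (i < j ∧ σ j < σ i) ∨ (j < i ∧ σ i < σ j)).card
      + 2 * (Finset.univ.filter fun i : Fin m => i < j ∧ σ i < σ j).card
      = (σ j : ℕ) + (j : ℕ) := by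
    rw [← hA, ← hB]
    simp only [Finset.card_filter, Finset.mul_sum, ← Finset.sum_add_distrib]
    apply Finset.sum_congr rfl
    intro i _
    have hne : i = j ∨ σ i ≠ σ j := by
      by_cases h : i = j
      · exact Or.inl h
      · exact Or.inr (fun h' => h (σ.injective h'))
    rcases hne with rfl | hne
    · simp
    · have h1 : i ≠ j := fun h => hne (by rw [h])
      rcases lt_or_gt_of_ne h1 with a | a <;> rcases lt_or_gt_of_ne hne with b | b <;>
        simp [a, b, a.not_gt, b.not_gt]
  refine ⟨?_, ?_⟩
  · unfold Nat.ModEq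
    omega
  · rw [← key, pow_add, pow_mul]
    simp
end

section
/- Let K be a field, V and W vector spaces over K of dimensions n and k respectively (n, k ≥ 1). Let (v_0,…,v_n) be a linearly generic tuple in V with Σ_{i=0}^n α_i v_i = 0 and Σ_{i=0}^n α_i = 1, and let (w_0,…,w_k) be a linearly generic tuple in W with Σ_{j=0}^k β_j w_j = 0 and Σ_{j=0}^k β_j = 1. Set A_u = Σ_{i=0}^u α_i and B_s = Σ_{j=0}^s β_j. Let γ be an admissible path and let C_{−1},C_0,…,C_{n+k} be the associated sequence. Then: (a) Σ_{j=0}^{n+k} (C_j − C_{j−1})·(v_{γ(j)_1}, w_{γ(j)_2}) = 0 in V × W; (b) any scalars Ξ_0,…,Ξ_{n+k} with Σ_j Ξ_j·(v_{γ(j)_1}, w_{γ(j)_2}) = 0 and Σ_j Ξ_j = 1 satisfy Ξ_j = C_j − C_{j−1} for all j; (c) if A_u ≠ B_s for all 0 ≤ u ≤ n−1 and 0 ≤ s ≤ k−1, then all the coefficients C_j − C_{j−1} are nonzero. -/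
/-- An admissible path on the `n × k` grid: a shortest lattice path from `(0,0)`
to `(n,k)`, each step going right or up. Only the values `γ 0, …, γ (n+k)` matter. -/
def AdmissiblePath (n k : ℕ) (γ : ℕ → Fin (n + 1) × Fin (k + 1)) : Prop :=
  γ 0 = (0, 0) ∧ γ (n + k) = (Fin.last n, Fin.last k) ∧
  ∀ j < n + k,
    (((γ (j + 1)).1 : ℕ) = ((γ j).1 : ℕ) + 1 ∧ (γ (j + 1)).2 = (γ j).2) ∨
    ((γ (j + 1)).1 = (γ j).1 ∧ ((γ (j + 1)).2 : ℕ) = ((γ j).2 : ℕ) + 1)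

/-- The partial sum `A_u = Σ_{i=0}^u α_i`. -/
def partialSum {K : Type*} [Field K] {n : ℕ} (α : Fin (n + 1) → K) (u : ℕ) : K :=
  ∑ i : Fin (n + 1), if (i : ℕ) ≤ u then α i else 0

/-- The sequence `C_0, …, C_{n+k}` attached to an admissible path `γ`:
`C_{n+k} = 1`, and for `j < n+k`, `C_j = A_i` if the `j`-th step of `γ` increases
the first coordinate from `i` to `i+1`, and `C_j = B_i` if the `j`-th step increases
the second coordinate from `i` to `i+1` (here `A` and `B` are the partial-sum
sequences of `α` and `β`). -/
def pathC {K : Type*} [Field K] {n k : ℕ} (α : Fin (n + 1) → K) (β : Fin (k + 1) → K)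
    (γ : ℕ → Fin (n + 1) × Fin (k + 1)) : ℕ → K := fun j =>
  if j = n + k then 1
  else if ((γ (j + 1)).1 : ℕ) = ((γ j).1 : ℕ) + 1
  then partialSum α ((γ j).1 : ℕ)
  else partialSum β ((γ j).2 : ℕ)

/-- The coefficient `C_j − C_{j−1}`, with the convention `C_{−1} = 0`. -/
def pathD {K : Type*} [Field K] {n k : ℕ} (α : Fin (n + 1) → K) (β : Fin (k + 1) → K)
    (γ : ℕ → Fin (n + 1) × Fin (k + 1)) : ℕ → K := fun j =>
  pathC α β γ j - (if j = 0 then 0 else pathC α β γ (j - 1))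

theorem pS_zero {K : Type*} [Field K] {n : ℕ} (α : Fin (n + 1) → K) :
    partialSum α 0 = α 0 := by
  unfold partialSum
  rw [Finset.sum_eq_single 0]
  · simp
  · intro b _ hb
    have : (b : ℕ) ≠ 0 := fun h => hb (Fin.ext h)
    simp [this]
  · simp

theorem pS_succ {K : Type*} [Field K] {n : ℕ} (α : Fin (n + 1) → K) (u : ℕ) (hu : u + 1 < n + 1) :
    partialSum α (u + 1) - partialSum α u = α ⟨u + 1, hu⟩ := by
  unfold partialSum
  rw [← Finset.sum_sub_distrib, Finset.sum_eq_single ⟨u + 1, hu⟩]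
  · simp
  · intro b _ hb
    have h1 : (b : ℕ) ≠ u + 1 := fun h => hb (Fin.ext h)
    by_cases h : (b : ℕ) ≤ u
    · simp [h, Nat.le_succ_of_le h]
    · have : ¬ (b : ℕ) ≤ u + 1 := by omega
      simp [h, this]
  · simp

theorem pS_last {K : Type*} [Field K] {n : ℕ} (α : Fin (n + 1) → K) :
    partialSum α n = ∑ i, α i := by
  unfold partialSum
  refine Finset.sum_congr rfl fun i _ => ?_
  rw [if_pos (by omega)]

theorem pS_ext {K : Type*} [Field K] {n : ℕ} (α c : Fin (n + 1) → K)
    (h : ∀ u ≤ n, partialSum c u = partialSum α u) : c = α := by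
  funext ⟨i, hi⟩
  cases i with
  | zero => have := h 0 (by omega); rw [pS_zero, pS_zero] at this; exact this
  | succ u => rw [← pS_succ c u hi, ← pS_succ α u hi, h (u + 1) (by omega), h u (by omega)]

/-- A relation vanishing at one index vanishes. -/
theorem rel_zero {K V : Type*} [Field K] [AddCommGroup V] [Module K V] {n : ℕ}
    (v : Fin (n + 1) → V)
    (hv : ∀ s : Finset (Fin (n + 1)), s.card = n → LinearIndependent K (fun i : s => v i.1))
    (d : Fin (n + 1) → K) (hd : ∑ i, d i • v i = 0) (i0 : Fin (n + 1)) (h0 : d i0 = 0) :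
    ∀ i, d i = 0 := by
  have h := hv (Finset.univ.erase i0) (by simp)
  rw [Fintype.linearIndependent_iff] at h
  have h2 := h (fun i => d i.1) (by
    rw [Finset.sum_coe_sort (Finset.univ.erase i0) (fun i => d i • v i)]
    rw [← Finset.add_sum_erase _ _ (Finset.mem_univ i0), h0, zero_smul, zero_add] at hd
    exact hd)
  intro i
  by_cases hi : i = i0
  · rw [hi, h0]
  · exact h2 ⟨i, by simp [hi]⟩

theorem rel_ne {K V : Type*} [Field K] [AddCommGroup V] [Module K V] {n : ℕ}
    (v : Fin (n + 1) → V)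
    (hv : ∀ s : Finset (Fin (n + 1)), s.card = n → LinearIndependent K (fun i : s => v i.1))
    (α : Fin (n + 1) → K) (hα : ∑ i, α i • v i = 0) (hα1 : ∑ i, α i = 1) (i : Fin (n + 1)) :
    α i ≠ 0 := by
  intro h
  have := rel_zero v hv α hα i h
  simp [this] at hα1

theorem rel_unique {K V : Type*} [Field K] [AddCommGroup V] [Module K V] {n : ℕ}
    (v : Fin (n + 1) → V)
    (hv : ∀ s : Finset (Fin (n + 1)), s.card = n → LinearIndependent K (fun i : s => v i.1))
    (α : Fin (n + 1) → K) (hα : ∑ i, α i • v i = 0) (hα1 : ∑ i, α i = 1)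
    (c : Fin (n + 1) → K) (hc : ∑ i, c i • v i = 0) (hc1 : ∑ i, c i = 1) : c = α := by
  have h0 := rel_ne v hv α hα hα1 0
  have h := rel_zero v hv (fun i => c i - (c 0 / α 0) * α i) (by
    simp only [sub_smul, mul_smul, Finset.sum_sub_distrib, ← Finset.smul_sum, hc, hα]
    simp) 0 (by field_simp; simp)
  have h1 : ∑ i, (c i - (c 0 / α 0) * α i) = 0 := Finset.sum_eq_zero fun i _ => h i
  rw [Finset.sum_sub_distrib, ← Finset.mul_sum, hc1, hα1, mul_one, sub_eq_zero] at h1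
  funext i
  have := h i
  rw [← h1, one_mul, sub_eq_zero] at this
  exact this

/-- Collected coefficients. -/
def collC {K : Type*} [Field K] {n : ℕ} (N : ℕ) (a : ℕ → Fin (n + 1)) (X : ℕ → K) :
    Fin (n + 1) → K := fun u => ∑ j ∈ Finset.range (N + 1), if a j = u then X j else 0

theorem collC_smul {K V : Type*} [Field K] [AddCommGroup V] [Module K V] {n : ℕ} (N : ℕ)
    (a : ℕ → Fin (n + 1)) (X : ℕ → K) (v : Fin (n + 1) → V) :
    ∑ u, collC N a X u • v u = ∑ j ∈ Finset.range (N + 1), X j • v (a j) := by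
  simp only [collC, Finset.sum_smul]
  rw [Finset.sum_comm]
  simp [ite_smul]

theorem collC_sum {K : Type*} [Field K] {n : ℕ} (N : ℕ)
    (a : ℕ → Fin (n + 1)) (X : ℕ → K) :
    ∑ u, collC N a X u = ∑ j ∈ Finset.range (N + 1), X j := by
  simp only [collC]
  rw [Finset.sum_comm]
  simp

theorem collC_pS {K : Type*} [Field K] {n : ℕ} (N : ℕ)
    (a : ℕ → Fin (n + 1)) (X : ℕ → K)
    (ha : ∀ j < N, (a (j + 1) : ℕ) = (a j : ℕ) + 1 ∨ a (j + 1) = a j)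
    (j : ℕ) (hj : j < N) (hs : (a (j + 1) : ℕ) = (a j : ℕ) + 1) :
    partialSum (collC N a X) (a j) = ∑ i ∈ Finset.range (j + 1), X i := by
  have mono : ∀ p q, p ≤ q → q ≤ N → (a p : ℕ) ≤ a q := by
    intro p q hpq
    induction q, hpq using Nat.le_induction with
    | base => simp
    | succ q hq ih =>
      intro h
      have h1 := ih (by omega)
      rcases ha q (by omega) with h2 | h2
      · omega
      · rw [h2]; exact h1
  have e1 : partialSum (collC N a X) (a j)
      = ∑ i ∈ Finset.range (N + 1), if (a i : ℕ) ≤ a j then X i else 0 := by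
    unfold partialSum collC
    simp only [← Finset.sum_filter]
    simp only [Finset.sum_filter]
    have : ∀ u : Fin (n + 1), (if (u : ℕ) ≤ a j then
        ∑ i ∈ Finset.range (N + 1), (if a i = u then X i else 0) else 0)
        = ∑ i ∈ Finset.range (N + 1), if a i = u then (if (u : ℕ) ≤ a j then X i else 0) else 0 := by
      intro u
      split_ifs <;> simp
    simp only [this]
    rw [Finset.sum_comm]
    simp
  rw [e1, ← Finset.sum_filter]
  refine Finset.sum_congr ?_ fun _ _ => rfl
  ext i
  simp only [Finset.mem_filter, Finset.mem_range]
  constructor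
  · rintro ⟨h1, h2⟩
    by_contra h
    have := mono (j + 1) i (by omega) (by omega)
    omega
  · intro h
    exact ⟨by omega, mono i j (by omega) (by omega)⟩

theorem exists_step {n : ℕ} (N : ℕ) (a : ℕ → Fin (n + 1)) (h0 : a 0 = 0) (hN : a N = Fin.last n)
    (ha : ∀ j < N, (a (j + 1) : ℕ) = (a j : ℕ) + 1 ∨ a (j + 1) = a j) (u : ℕ) (hu : u < n) :
    ∃ j < N, (a j : ℕ) = u ∧ (a (j + 1) : ℕ) = (a j : ℕ) + 1 := by
  by_contra! hcon
  have : ∀ j ≤ N, (a j : ℕ) ≤ u := by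
    intro j
    induction j with
    | zero => simp [h0]
    | succ j ih =>
      intro h
      have h1 := ih (by omega)
      rcases ha j (by omega) with h2 | h2
      · have := hcon j (by omega)
        by_cases h3 : (a j : ℕ) = u
        · exact absurd h2 (this h3)
        · omega
      · rw [h2]; exact h1
  have := this N le_rfl
  rw [hN] at this
  simp at this
  omega

theorem collC_eq {K : Type*} [Field K] {n : ℕ} (N : ℕ)
    (a : ℕ → Fin (n + 1)) (h0 : a 0 = 0) (hN : a N = Fin.last n) (X : ℕ → K) (α : Fin (n + 1) → K)
    (hα1 : ∑ i, α i = 1)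
    (ha : ∀ j < N, (a (j + 1) : ℕ) = (a j : ℕ) + 1 ∨ a (j + 1) = a j)
    (hX : ∀ j < N, (a (j + 1) : ℕ) = (a j : ℕ) + 1 →
      ∑ i ∈ Finset.range (j + 1), X i = partialSum α (a j))
    (hX1 : ∑ i ∈ Finset.range (N + 1), X i = 1) : collC N a X = α := by
  apply pS_ext
  intro u hu
  rcases hu.lt_or_eq with h | rfl
  · obtain ⟨j, hj, rfl, hs⟩ := exists_step N a h0 hN ha u h
    rw [collC_pS N a X ha j hj hs, hX j hj hs]
  · rw [pS_last, pS_last, collC_sum, hα1, hX1]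

theorem pathD_sum {K : Type*} [Field K] {n k : ℕ} (α : Fin (n + 1) → K) (β : Fin (k + 1) → K)
    (γ : ℕ → Fin (n + 1) × Fin (k + 1)) (j : ℕ) :
    ∑ i ∈ Finset.range (j + 1), pathD α β γ i = pathC α β γ j := by
  induction j with
  | zero => simp [pathD]
  | succ j ih => rw [Finset.sum_range_succ, ih]; simp [pathD]

theorem stmt16 (K V W : Type*) [Field K]
    [AddCommGroup V] [Module K V] [AddCommGroup W] [Module K W]
    (n k : ℕ) (hn : 1 ≤ n) (hk : 1 ≤ k)
    (hdV : Module.finrank K V = n) (hdW : Module.finrank K W = k)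
    (v : Fin (n + 1) → V) (w : Fin (k + 1) → W)
    (hv : ∀ s : Finset (Fin (n + 1)), s.card = n →
      LinearIndependent K (fun i : s => v i.1))
    (hw : ∀ s : Finset (Fin (k + 1)), s.card = k →
      LinearIndependent K (fun i : s => w i.1))
    (α : Fin (n + 1) → K) (β : Fin (k + 1) → K)
    (hα0 : ∑ i, α i • v i = 0) (hα1 : ∑ i, α i = 1)
    (hβ0 : ∑ j, β j • w j = 0) (hβ1 : ∑ j, β j = 1)
    (γ : ℕ → Fin (n + 1) × Fin (k + 1)) (hγ : AdmissiblePath n k γ) :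
    (∑ j ∈ Finset.range (n + k + 1),
        pathD α β γ j • ((v (γ j).1, w (γ j).2) : V × W) = 0) ∧
    (∀ Ξ : ℕ → K,
      (∑ j ∈ Finset.range (n + k + 1), Ξ j • ((v (γ j).1, w (γ j).2) : V × W) = 0) →
      (∑ j ∈ Finset.range (n + k + 1), Ξ j = 1) →
      ∀ j ≤ n + k, Ξ j = pathD α β γ j) ∧
    ((∀ (u : Fin n) (t : Fin k), partialSum α (u : ℕ) ≠ partialSum β (t : ℕ)) →
      ∀ j ≤ n + k, pathD α β γ j ≠ 0) := by
  obtain ⟨g0, gN, gs⟩ := hγ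
  have ha : ∀ j < n + k, ((γ (j + 1)).1 : ℕ) = ((γ j).1 : ℕ) + 1 ∨ (γ (j + 1)).1 = (γ j).1 := by
    intro j hj
    rcases gs j hj with h | h
    · exact Or.inl h.1
    · exact Or.inr h.1
  have hb : ∀ j < n + k, ((γ (j + 1)).2 : ℕ) = ((γ j).2 : ℕ) + 1 ∨ (γ (j + 1)).2 = (γ j).2 := by
    intro j hj
    rcases gs j hj with h | h
    · exact Or.inr h.2
    · exact Or.inl h.2
  have hCN : pathC α β γ (n + k) = 1 := by simp [pathC]
  have hCa : ∀ j < n + k, ((γ (j + 1)).1 : ℕ) = ((γ j).1 : ℕ) + 1 →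
      pathC α β γ j = partialSum α (γ j).1 := by
    intro j hj h
    simp [pathC, hj.ne, h]
  have hCb : ∀ j < n + k, ((γ (j + 1)).2 : ℕ) = ((γ j).2 : ℕ) + 1 →
      pathC α β γ j = partialSum β (γ j).2 := by
    intro j hj h
    have : ¬ ((γ (j + 1)).1 : ℕ) = ((γ j).1 : ℕ) + 1 := by
      intro h'
      rcases gs j hj with h2 | h2
      · rw [h2.2] at h; omega
      · rw [h2.1] at h'; omega
    simp [pathC, hj.ne, this]
  refine ⟨?_, ?_, ?_⟩
  · have e1 := collC_eq (n + k) (fun j => (γ j).1) (by simp [g0]) (by simp [gN]) (pathD α β γ) α hα1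
      ha (fun j hj h => by rw [pathD_sum]; exact hCa j hj h) (by rw [pathD_sum, hCN])
    have e2 := collC_eq (n + k) (fun j => (γ j).2) (by simp [g0]) (by simp [gN]) (pathD α β γ) β hβ1
      hb (fun j hj h => by rw [pathD_sum]; exact hCb j hj h) (by rw [pathD_sum, hCN])
    have f1 := collC_smul (n + k) (fun j => (γ j).1) (pathD α β γ) v
    have f2 := collC_smul (n + k) (fun j => (γ j).2) (pathD α β γ) w
    rw [e1, hα0] at f1
    rw [e2, hβ0] at f2
    ext
    · simpa [Prod.fst_sum] using f1.symm
    · simpa [Prod.snd_sum] using f2.symm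
  · intro X hX hX1
    have x1 : ∑ j ∈ Finset.range (n + k + 1), X j • v (γ j).1 = 0 := by
      simpa [Prod.fst_sum] using congrArg Prod.fst hX
    have x2 : ∑ j ∈ Finset.range (n + k + 1), X j • w (γ j).2 = 0 := by
      simpa [Prod.snd_sum] using congrArg Prod.snd hX
    have e1 := rel_unique v hv α hα0 hα1 (collC (n + k) (fun j => (γ j).1) X)
      (by rw [collC_smul]; exact x1) (by rw [collC_sum, hX1])
    have e2 := rel_unique w hw β hβ0 hβ1 (collC (n + k) (fun j => (γ j).2) X)
      (by rw [collC_smul]; exact x2) (by rw [collC_sum, hX1])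
    have S : ∀ j ≤ n + k, ∑ i ∈ Finset.range (j + 1), X i = pathC α β γ j := by
      intro j hj
      rcases hj.lt_or_eq with h | rfl
      · rcases gs j h with h2 | h2
        · rw [hCa j h h2.1, ← collC_pS (n + k) (fun j => (γ j).1) X ha j h h2.1, e1]
        · rw [hCb j h h2.2, ← collC_pS (n + k) (fun j => (γ j).2) X hb j h h2.2, e2]
      · rw [hX1, hCN]
    intro j hj
    cases j with
    | zero => have := S 0 hj; simpa [pathD] using this
    | succ j =>
      have s1 := S (j + 1) hj
      rw [Finset.sum_range_succ, S j (by omega)] at s1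
      simp [pathD, ← s1]
  · intro hne j hj
    have nα := rel_ne v hv α hα0 hα1
    have nβ := rel_ne w hw β hβ0 hβ1
    cases j with
    | zero =>
      have hp : 0 < n + k := by omega
      simp only [pathD, if_true, sub_zero]
      rcases gs 0 hp with h | h
      · rw [hCa 0 hp h.1, g0]; simpa [pS_zero] using nα 0
      · rw [hCb 0 hp h.2, g0]; simpa [pS_zero] using nβ 0
    | succ j =>
      have hj' : j < n + k := by omega
      simp only [pathD, Nat.add_one_ne_zero, if_false, Nat.add_sub_cancel]
      have l1 := (γ (j + 1)).1.isLt
      have l2 := (γ (j + 1)).2.isLt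
      rcases hj.lt_or_eq with hl | hl
      · have l3 := (γ (j + 1 + 1)).1.isLt
        have l4 := (γ (j + 1 + 1)).2.isLt
        rcases gs j hj' with h | h <;> rcases gs (j + 1) hl with h' | h'
        · rw [hCa j hj' h.1, hCa _ hl h'.1, h.1, pS_succ α (γ j).1 (by omega)]
          exact nα _
        · rw [hCa j hj' h.1, hCb _ hl h'.2]
          exact sub_ne_zero.2 (hne ⟨(γ j).1, by omega⟩ ⟨(γ (j + 1)).2, by omega⟩).symm
        · rw [hCb j hj' h.2, hCa _ hl h'.1]
          exact sub_ne_zero.2 (hne ⟨(γ (j + 1)).1, by omega⟩ ⟨(γ j).2, by omega⟩)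
        · rw [hCb j hj' h.2, hCb _ hl h'.2, h.2, pS_succ β (γ j).2 (by omega)]
          exact nβ _
      · have q1 : ((γ (j + 1)).1 : ℕ) = n := by rw [hl, gN]; simp
        have q2 : ((γ (j + 1)).2 : ℕ) = k := by rw [hl, gN]; simp
        have c1 : pathC α β γ (j + 1) = 1 := by rw [hl, hCN]
        rcases gs j hj' with h | h
        · have : (1 : K) = partialSum α ((γ (j + 1)).1 : ℕ) := by rw [q1, pS_last, hα1]
          rw [hCa j hj' h.1, c1, this, h.1, pS_succ α (γ j).1 (by omega)]
          exact nα _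
        · have : (1 : K) = partialSum β ((γ (j + 1)).2 : ℕ) := by rw [q2, pS_last, hβ1]
          rw [hCb j hj' h.2, c1, this, h.2, pS_succ β (γ j).2 (by omega)]
          exact nβ _
end
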